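/- arXiv:1412.0993 — 7 statements merged into one kernel-verified Lean document; each statement's English description precedes it below -/
import Mathlib

section
/- Let X be a real Banach space, a < b real numbers, and f : [a,b] → X a function of bounded variation on [a,b]. Then there exist a countable set of indices K, an injective family (s_k)_{k∈K} of points of [a,b], and families (c_k)_{k∈K}, (d_k)_{k∈K} in X with Σ_{k∈K} (‖c_k‖ + ‖d_k‖) < ∞, such that the break function f^B(t) = Σ_{k : a ≤ s_k < t} c_k + Σ_{k : a < s_k ≤ t} d_k is well defined for every t ∈ [a,b] and the function f − f^B is continuous on [a,b]. -/
open Set Filter Topology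

/-!
Extend `f` to `g : ℝ → X`, constant to the left of `a` and to the right of `b`; then `g` has
bounded variation on `ℝ` and, `X` being complete, one-sided limits everywhere. The break function
is built from the jumps `c s = g (s+) - g s` and `d s = g s - g (s-)`, indexed by the set of `s`
where one of them is nonzero, which is contained in `[a, b]`.

The jumps are absolutely summable (`summable_jumps`) because the two jumps at a point are bounded
by the variation of `g` around it and the variations over consecutive intervals add up. By dominated
convergence, the break function with summable jump families `c`, `d` has right jump `c x` and left
jump `d x` at every point `x` (`tendsto_break_right`, `tendsto_break_left`). Hence subtracting it
from `g` cancels all jumps, and the difference is continuous.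
-/

/-- The variation on `(-∞, x)` dominates the variation on `(-∞, m)` together with both jumps at `m`,
for `m < x`: the inductive step of the bound on sums of jumps. -/
lemma eVariationOn_Iio_add_jumps_le {X : Type*} [NormedAddCommGroup X] [CompleteSpace X]
    {g : ℝ → X} (hg : BoundedVariationOn g univ) {m x : ℝ} (hmx : m < x) :
    eVariationOn g (Iio m) +
      ENNReal.ofReal (‖g.rightLim m - g m‖ + ‖g m - g.leftLim m‖) ≤ eVariationOn g (Iio x) := by
  have hright : edist (g m) (g.rightLim m) ≤ eVariationOn g (Ico m x) := by
    have hlim : Tendsto (fun y => edist (g m) (g y)) (𝓝[>] m)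
        (𝓝 (edist (g m) (g.rightLim m))) :=
      tendsto_const_nhds.edist (hg.tendsto_rightLim m)
    refine le_of_tendsto hlim ?_
    filter_upwards [Ioo_mem_nhdsGT hmx] with y hy
    exact eVariationOn.edist_le g ⟨le_rfl, hmx⟩ ⟨hy.1.le, hy.2⟩
  have hunion : eVariationOn g (Iic m) + eVariationOn g (Ico m x) ≤ eVariationOn g (Iio x) := by
    refine (eVariationOn.add_le_union g fun y hy z hz => le_trans hy hz.1).trans
      (eVariationOn.mono g ?_)
    rintro y (hy | hy)
    · exact lt_of_le_of_lt hy hmx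
    · exact hy.2
  rw [ENNReal.ofReal_add (norm_nonneg _) (norm_nonneg _), ← dist_eq_norm, ← dist_eq_norm,
    ← edist_dist, ← edist_dist, edist_comm (g.rightLim m)]
  calc _ = eVariationOn g (Iic m) + edist (g m) (g.rightLim m) := by
        rw [hg.eVariationOn_Iic_eq_Iio_add_edist]; ring
    _ ≤ _ := (add_le_add le_rfl hright).trans hunion

lemma summable_jumps {X : Type*} [NormedAddCommGroup X] [CompleteSpace X]
    {g : ℝ → X} (hg : BoundedVariationOn g univ) :
    Summable fun s => ‖g.rightLim s - g s‖ + ‖g s - g.leftLim s‖ := by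
  have hbound : ∀ (F : Finset ℝ) (x : ℝ), (∀ y ∈ F, y < x) →
      ∑ s ∈ F, ENNReal.ofReal (‖g.rightLim s - g s‖ + ‖g s - g.leftLim s‖)
        ≤ eVariationOn g (Iio x) := by
    intro F
    induction F using Finset.induction_on_max with
    | empty => simp
    | insert m F hm ih =>
      intro x hx
      rw [Finset.sum_insert fun h => lt_irrefl _ (hm m h), add_comm]
      exact (add_le_add (ih m hm) le_rfl).trans
        (eVariationOn_Iio_add_jumps_le hg (hx m (Finset.mem_insert_self _ _)))
  refine summable_of_sum_le (c := (eVariationOn g univ).toReal) (fun s => by positivity) fun F => ?_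
  rw [← ENNReal.ofReal_le_iff_le_toReal hg, ENNReal.ofReal_sum_of_nonneg fun s _ => by positivity]
  obtain ⟨M, hM⟩ := F.exists_le
  exact (hbound F (M + 1) fun y hy => by linarith [hM y hy]).trans
    (eVariationOn.mono g (subset_univ _))

/-- The term of the break function contributed by a point `s` with right jump `c s` and
left jump `d s`, without reference to the endpoint `a`. -/
noncomputable def breakTerm {X : Type*} [NormedAddCommGroup X] (c d : ℝ → X) (t s : ℝ) : X :=
  (if s < t then c s else 0) + (if s ≤ t then d s else 0)

section Break

variable {X : Type*} [NormedAddCommGroup X] {c d : ℝ → X}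

lemma norm_breakTerm_le (t s : ℝ) : ‖breakTerm c d t s‖ ≤ ‖c s‖ + ‖d s‖ := by
  unfold breakTerm
  refine (norm_add_le _ _).trans (add_le_add ?_ ?_) <;> split_ifs <;> simp

variable [CompleteSpace X]

lemma summable_breakTerm (h : Summable fun s => ‖c s‖ + ‖d s‖) (t : ℝ) :
    Summable (breakTerm c d t) :=
  Summable.of_norm_bounded h (norm_breakTerm_le t)

lemma tendsto_break_right (h : Summable fun s => ‖c s‖ + ‖d s‖) (x : ℝ) :
    Tendsto (fun t => ∑' s, breakTerm c d t s) (𝓝[>] x)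
      (𝓝 (∑' s, breakTerm c d x s + c x)) := by
  have hsum : ∑' s, (breakTerm c d x s + Pi.single (M := fun _ => X) x (c x) s)
      = ∑' s, breakTerm c d x s + c x := by
    rw [(summable_breakTerm h x).tsum_add (hasSum_pi_single x (c x)).summable, tsum_pi_single]
  rw [← hsum]
  refine tendsto_tsum_of_dominated_convergence h (fun s => ?_)
    (Eventually.of_forall fun t s => norm_breakTerm_le t s)
  refine tendsto_const_nhds.congr' ?_
  rcases lt_or_ge x s with hs | hs
  · filter_upwards [Ioo_mem_nhdsGT hs] with t ht
    simp [breakTerm, hs.ne', hs.not_gt, hs.not_ge, ht.2.not_gt, ht.2.not_ge]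
  · filter_upwards [self_mem_nhdsWithin] with t ht
    have ht : x < t := ht
    rcases hs.eq_or_lt with rfl | hs'
    · simp [breakTerm, ht, ht.le, add_comm]
    · simp [breakTerm, hs', hs, hs'.ne, hs'.trans ht, (hs'.trans ht).le]

lemma tendsto_break_left (h : Summable fun s => ‖c s‖ + ‖d s‖) (x : ℝ) :
    Tendsto (fun t => ∑' s, breakTerm c d t s) (𝓝[<] x)
      (𝓝 (∑' s, breakTerm c d x s - d x)) := by
  have hsum : ∑' s, (breakTerm c d x s - Pi.single (M := fun _ => X) x (d x) s)
      = ∑' s, breakTerm c d x s - d x := by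
    rw [(summable_breakTerm h x).tsum_sub (hasSum_pi_single x (d x)).summable, tsum_pi_single]
  rw [← hsum]
  refine tendsto_tsum_of_dominated_convergence h (fun s => ?_)
    (Eventually.of_forall fun t s => norm_breakTerm_le t s)
  refine tendsto_const_nhds.congr' ?_
  rcases lt_or_ge s x with hs | hs
  · filter_upwards [Ioo_mem_nhdsLT hs] with t ht
    simp [breakTerm, hs.ne, hs, hs.le, ht.1, ht.1.le]
  · filter_upwards [self_mem_nhdsWithin] with t ht
    have ht : t < x := ht
    rcases hs.eq_or_lt with rfl | hs'
    · simp [breakTerm, ht.not_gt, ht.not_ge]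
    · simp [breakTerm, hs'.ne', hs'.not_ge, hs'.not_gt, (ht.trans hs').not_ge,
        (ht.trans hs').not_gt]

end Break

/-- **Jordan decomposition, existence** (Theorem 3.1, existence part).
If `f : [a,b] → X` is of bounded variation on `[a,b]`, then there is a break function
`f^B(t) = Σ_{a ≤ s_k < t} c_k + Σ_{a < s_k ≤ t} d_k` (given by an injective countable
family of points `s_k` of `[a,b]` and absolutely summable families `c_k, d_k` in `X`,
the defining series converging for every `t ∈ [a,b]`) such that `f - f^B` is
continuous on `[a,b]`. -/
theorem jordan_decomposition_exists
    {X : Type*} [NormedAddCommGroup X] [NormedSpace ℝ X] [CompleteSpace X]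
    {a b : ℝ} (hab : a < b) (f : ℝ → X)
    (hf : BoundedVariationOn f (Set.Icc a b)) :
    ∃ (ι : Type) (_ : Countable ι) (s : ι → ℝ) (c d : ι → X),
      Function.Injective s ∧ (∀ k, s k ∈ Set.Icc a b) ∧
      Summable (fun k => ‖c k‖ + ‖d k‖) ∧
      (∀ t ∈ Set.Icc a b,
        Summable (fun k =>
          (if a ≤ s k ∧ s k < t then c k else 0) +
          (if a < s k ∧ s k ≤ t then d k else 0))) ∧
      ContinuousOn
        (fun t => f t - ∑' k,
          ((if a ≤ s k ∧ s k < t then c k else 0) +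
           (if a < s k ∧ s k ≤ t then d k else 0)))
        (Set.Icc a b) := by
  let g : ℝ → X := f ∘ fun t => max a (min b t)
  have hg : BoundedVariationOn g univ := by
    refine ne_top_of_le_ne_top hf (eVariationOn.comp_le_of_monotoneOn f _ ?_ ?_)
    · intro x _ y _ hxy
      exact max_le_max le_rfl (min_le_min le_rfl hxy)
    · intro x _
      exact ⟨le_max_left _ _, max_le hab.le (min_le_left _ _)⟩
  have hgf : ∀ t ∈ Icc a b, g t = f t := fun t ht => by
    simp [g, min_eq_right ht.2, max_eq_right ht.1]
  have hga : ∀ t ≤ a, g t = f a := fun t ht => by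
    simp [g, min_eq_right (ht.trans hab.le), max_eq_left ht]
  have hgb : ∀ t, b ≤ t → g t = f b := fun t ht => by
    simp [g, min_eq_left ht, max_eq_right hab.le]
  let c : ℝ → X := fun s => g.rightLim s - g s
  let d : ℝ → X := fun s => g s - g.leftLim s
  have hsum : Summable fun s => ‖c s‖ + ‖d s‖ := summable_jumps hg
  have hca : ∀ s < a, c s = 0 := fun s hs => by
    have hlim : g.rightLim s = f a := by
      refine rightLim_eq_of_tendsto (tendsto_const_nhds.congr' ?_)
      filter_upwards [Ioo_mem_nhdsGT hs] with t ht using (hga t ht.2.le).symm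
    simp [c, hlim, hga s hs.le]
  have hda : ∀ s ≤ a, d s = 0 := fun s hs => by
    have hlim : g.leftLim s = f a := by
      refine leftLim_eq_of_tendsto (tendsto_const_nhds.congr' ?_)
      filter_upwards [self_mem_nhdsWithin] with t ht using (hga t (le_trans (le_of_lt ht) hs)).symm
    simp [d, hlim, hga s hs]
  have hcb : ∀ s, b < s → c s = 0 := fun s hs => by
    have hlim : g.rightLim s = f b := by
      refine rightLim_eq_of_tendsto (tendsto_const_nhds.congr' ?_)
      filter_upwards [self_mem_nhdsWithin] with t ht
        using (hgb t (hs.le.trans (le_of_lt ht))).symm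
    simp [c, hlim, hgb s hs.le]
  have hdb : ∀ s, b < s → d s = 0 := fun s hs => by
    have hlim : g.leftLim s = f b := by
      refine leftLim_eq_of_tendsto (tendsto_const_nhds.congr' ?_)
      filter_upwards [Ioo_mem_nhdsLT hs] with t ht using (hgb t ht.1.le).symm
    simp [d, hlim, hgb s hs.le]
  let K : Set ℝ := Function.support fun s => ‖c s‖ + ‖d s‖
  have hK : ∀ s ∈ K, s ∈ Icc a b := by
    intro s hs
    by_contra hmem
    apply hs
    rcases lt_or_ge s a with h | h
    · simp [hca s h, hda s h.le]
    · have h' : b < s := not_le.1 fun h' => hmem ⟨h, h'⟩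
      simp [hcb s h', hdb s h']
  -- The conditions involving `a` only discard points whose jumps vanish.
  have hterm : ∀ t s : ℝ, (if a ≤ s ∧ s < t then c s else 0) +
      (if a < s ∧ s ≤ t then d s else 0) = breakTerm c d t s := by
    intro t s
    unfold breakTerm
    congr 1
    · by_cases h : a ≤ s
      · simp [h]
      · simp [h, hca s (not_le.1 h)]
    · by_cases h : a < s
      · simp [h]
      · simp [h, hda s (not_lt.1 h)]
  have hsupp : ∀ t, Function.support (breakTerm c d t) ⊆ K := by
    intro t s hs h0
    exact hs (norm_le_zero_iff.1 ((norm_breakTerm_le t s).trans h0.le))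
  refine ⟨K, hsum.countable_support.to_subtype, Subtype.val, fun k => c k, fun k => d k,
    Subtype.val_injective, fun k => hK k k.2, hsum.subtype K, fun t _ => ?_, ?_⟩
  · simp only [hterm]
    exact (summable_breakTerm hsum t).subtype K
  · have hcont : Continuous fun t => g t - ∑' s, breakTerm c d t s := by
      refine continuous_iff_continuousAt.2 fun x => continuousAt_iff_continuous_left'_right'.2
        ⟨?_, ?_⟩
      · have h := (hg.tendsto_leftLim x).sub (tendsto_break_left hsum x)
        have heq : g.leftLim x - (∑' s, breakTerm c d x s - d x)
            = g x - ∑' s, breakTerm c d x s := by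
          simp only [d]; abel
        rwa [heq] at h
      · have h := (hg.tendsto_rightLim x).sub (tendsto_break_right hsum x)
        have heq : g.rightLim x - (∑' s, breakTerm c d x s + c x)
            = g x - ∑' s, breakTerm c d x s := by
          simp only [c]; abel
        rwa [heq] at h
    refine hcont.continuousOn.congr fun t ht => ?_
    simp only [hterm, hgf t ht]
    rw [tsum_subtype_eq_of_support_subset (hsupp t)]
end

section
/- Let X be a real Banach space, a < b real numbers, and let f : [a,b] → X be the break function f(t) = Σ_{k : a ≤ s_k < t} c_k + Σ_{k : a < s_k ≤ t} d_k determined by an injective countable family (s_k) ⊆ [a,b] and families (c_k), (d_k) in X with Σ_k (‖c_k‖ + ‖d_k‖) < ∞. Then for every t ∈ [a,b): the right-hand limit f(t+) exists and equals Σ_{k : a ≤ s_k ≤ t} c_k + Σ_{k : a < s_k ≤ t} d_k; in particular f(t+) − f(t) = c_k if t = s_k and f(t+) = f(t) if t is not among the s_k. Similarly, for every t ∈ (a,b] the left-hand limit f(t−) exists and equals Σ_{k : a ≤ s_k < t} c_k + Σ_{k : a < s_k < t} d_k; in particular f(t) − f(t−) = d_k if t = s_k and f(t−) = f(t) if t is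 not among the s_k. -/
/-!
Every sum in the statement has terms `(c j or 0) + (d j or 0)`, bounded in norm by the summable
family `‖c j‖ + ‖d j‖` (`norm_selected_add_le`). For a fixed index `j`, the conditions `s j < u` and
`s j ≤ u` are eventually constant as `u` tends to `t` from one side, so each term of `f u` is
eventually equal to the corresponding term of the claimed limit; dominated convergence for series
gives the one-sided limits. The claimed limit and `f t` differ termwise only at indices with
`s j = t`, and injectivity of `s` leaves at most one of these, which yields the jump.
-/

open Set Filter Topology

theorem norm_selected_add_le {X : Type*} [NormedAddCommGroup X] (p q : Prop) [Decidable p]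
    [Decidable q] (x y : X) :
    ‖(if p then x else 0) + (if q then y else 0)‖ ≤ ‖x‖ + ‖y‖ := by
  refine (norm_add_le _ _).trans (add_le_add ?_ ?_)
  · split_ifs <;> simp
  · split_ifs <;> simp

theorem summable_selected_add {X : Type*} [NormedAddCommGroup X] [CompleteSpace X] {ι : Type*}
    (p q : ι → Prop) [DecidablePred p] [DecidablePred q] {c d : ι → X}
    (hsum : Summable fun k => ‖c k‖ + ‖d k‖) :
    Summable fun j => (if p j then c j else 0) + (if q j then d j else 0) :=
  Summable.of_norm_bounded hsum fun _ => norm_selected_add_le _ _ _ _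

/-- **One-sided limits and jumps of a break function** (Section 3).
Let `f(t) = Σ_{a ≤ s_k < t} c_k + Σ_{a < s_k ≤ t} d_k` be a break function on `[a,b]`.
For `t ∈ [a,b)` the right-hand limit `f(t+)` exists and equals
`Σ_{a ≤ s_k ≤ t} c_k + Σ_{a < s_k ≤ t} d_k`; in particular `f(t+) - f(t) = c_k` if
`t = s_k` and `f(t+) = f(t)` if `t` is not among the `s_k`.  Analogously, for
`t ∈ (a,b]` the left-hand limit `f(t−)` exists and equals
`Σ_{a ≤ s_k < t} c_k + Σ_{a < s_k < t} d_k`; in particular `f(t) - f(t−) = d_k` if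
`t = s_k` and `f(t−) = f(t)` if `t` is not among the `s_k`. -/
theorem break_function_one_sided_limits
    {X : Type*} [NormedAddCommGroup X] [NormedSpace ℝ X] [CompleteSpace X]
    {a b : ℝ} (hab : a < b) {ι : Type*} [Countable ι]
    (s : ι → ℝ) (hs : Function.Injective s) (hmem : ∀ k, s k ∈ Set.Icc a b)
    (c d : ι → X) (hsum : Summable fun k => ‖c k‖ + ‖d k‖)
    (f : ℝ → X)
    (hf : ∀ t ∈ Set.Icc a b,
      f t = ∑' j, ((if a ≤ s j ∧ s j < t then c j else 0) +
                   (if a < s j ∧ s j ≤ t then d j else 0))) :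
    (∀ t ∈ Set.Ico a b,
      Filter.Tendsto f (nhdsWithin t (Set.Ioi t))
        (nhds (∑' j, ((if a ≤ s j ∧ s j ≤ t then c j else 0) +
                      (if a < s j ∧ s j ≤ t then d j else 0)))) ∧
      (∀ k, t = s k →
        (∑' j, ((if a ≤ s j ∧ s j ≤ t then c j else 0) +
                (if a < s j ∧ s j ≤ t then d j else 0))) - f t = c k) ∧
      (t ∉ Set.range s →
        (∑' j, ((if a ≤ s j ∧ s j ≤ t then c j else 0) +
                (if a < s j ∧ s j ≤ t then d j else 0))) = f t)) ∧
    (∀ t ∈ Set.Ioc a b,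
      Filter.Tendsto f (nhdsWithin t (Set.Iio t))
        (nhds (∑' j, ((if a ≤ s j ∧ s j < t then c j else 0) +
                      (if a < s j ∧ s j < t then d j else 0)))) ∧
      (∀ k, t = s k →
        f t - (∑' j, ((if a ≤ s j ∧ s j < t then c j else 0) +
                      (if a < s j ∧ s j < t then d j else 0))) = d k) ∧
      (t ∉ Set.range s →
        (∑' j, ((if a ≤ s j ∧ s j < t then c j else 0) +
                (if a < s j ∧ s j < t then d j else 0))) = f t)) := by
  refine ⟨fun t ht => ⟨?_, ?_, ?_⟩, fun t ht => ⟨?_, ?_, ?_⟩⟩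
  · have hev : ∀ᶠ u in 𝓝[>] t, u ∈ Set.Ioo t b := Ioo_mem_nhdsGT ht.2
    refine Tendsto.congr' (f₁ := fun u => ∑' j, ((if a ≤ s j ∧ s j < u then c j else 0) +
      (if a < s j ∧ s j ≤ u then d j else 0))) ?_ ?_
    · filter_upwards [hev] with u hu
      exact (hf u ⟨ht.1.trans hu.1.le, hu.2.le⟩).symm
    · refine tendsto_tsum_of_dominated_convergence hsum (fun j => ?_)
        (Eventually.of_forall fun u j => norm_selected_add_le _ _ _ _)
      refine tendsto_const_nhds.congr' ?_
      rcases le_or_gt (s j) t with h | h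
      · filter_upwards [self_mem_nhdsWithin] with u (hu : t < u)
        simp [h, h.trans hu.le, h.trans_lt hu]
      · filter_upwards [Ioo_mem_nhdsGT h] with u hu
        simp [h.not_ge, hu.2.not_ge, hu.2.le]
  · intro k hk
    rw [hf t ⟨ht.1, ht.2.le⟩, ← (summable_selected_add _ _ hsum).tsum_sub
      (summable_selected_add _ _ hsum), tsum_eq_single k]
    · simp [hk, (hmem k).1]
    · intro j hj
      have hne : s j ≠ t := fun h => hj (hs (h.trans hk))
      simp [le_iff_lt_or_eq (a := s j), hne]
  · intro hr
    rw [hf t ⟨ht.1, ht.2.le⟩]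
    refine tsum_congr fun j => ?_
    have hne : s j ≠ t := fun h => hr ⟨j, h⟩
    simp [le_iff_lt_or_eq (a := s j), hne]
  · have hev : ∀ᶠ u in 𝓝[<] t, u ∈ Set.Ioo a t := Ioo_mem_nhdsLT ht.1
    refine Tendsto.congr' (f₁ := fun u => ∑' j, ((if a ≤ s j ∧ s j < u then c j else 0) +
      (if a < s j ∧ s j ≤ u then d j else 0))) ?_ ?_
    · filter_upwards [hev] with u hu
      exact (hf u ⟨hu.1.le, hu.2.le.trans ht.2⟩).symm
    · refine tendsto_tsum_of_dominated_convergence hsum (fun j => ?_)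
        (Eventually.of_forall fun u j => norm_selected_add_le _ _ _ _)
      refine tendsto_const_nhds.congr' ?_
      rcases lt_or_ge (s j) t with h | h
      · filter_upwards [Ioo_mem_nhdsLT h] with u hu
        simp [h, hu.1, hu.1.le]
      · filter_upwards [self_mem_nhdsWithin] with u (hu : u < t)
        simp [h.not_gt, (hu.trans_le h).not_ge, (hu.trans_le h).le]
  · intro k hk
    rw [hf t ⟨ht.1.le, ht.2⟩, ← (summable_selected_add _ _ hsum).tsum_sub
      (summable_selected_add _ _ hsum), tsum_eq_single k]
    · simp [← hk, ht.1]
    · intro j hj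
      have hne : s j ≠ t := fun h => hj (hs (h.trans hk))
      simp [le_iff_lt_or_eq (a := s j), hne]
  · intro hr
    rw [hf t ⟨ht.1.le, ht.2⟩]
    refine tsum_congr fun j => ?_
    have hne : s j ≠ t := fun h => hr ⟨j, h⟩
    simp [le_iff_lt_or_eq (a := s j), hne]
end

section
/- Let X be a real Banach space, a < b real numbers, and let f : [a,b] → X be the break function f(t) = Σ_{k : a ≤ s_k < t} c_k + Σ_{k : a < s_k ≤ t} d_k determined by an injective countable family (s_k) ⊆ [a,b] and families (c_k), (d_k) in X with Σ_k (‖c_k‖ + ‖d_k‖) < ∞. Then f is of bounded variation on [a,b] and its variation equals Var(f, [a,b]) = Σ_{k : s_k < b} ‖c_k‖ + Σ_{k : s_k > a} ‖d_k‖. -/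
/-!
The increment of a break function over `[x, y]` is the sum of the `c j` with `x ≤ s j < y` and of
the `d j` with `x < s j ≤ y` (`increment`); everything follows from this.

Upper bound: the increments are dominated by those of the nondecreasing function `majorant`,
obtained by replacing each `c j`, `d j` by its norm, so the sum along a partition telescopes.

Lower bound: by dominated convergence the increments of `f` on the right and on the left of `s k`
converge to `c k` and `d k` (`tendsto_right`, `tendsto_left`). For a finite set of indices, the
jumps are collected one at a time in increasing order of position, using additivity of the
variation over adjacent intervals (`finite_lower`). The series is the supremum of its finite
partial sums.
-/

open Set Filter Topology ENNReal NNReal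

namespace BreakFunction

variable {X : Type*} [NormedAddCommGroup X] {a b : ℝ} {ι : Type*}
  {s : ι → ℝ} {c d : ι → X} {f : ℝ → X}

/-- `f` is the break function on `[a, b]` with break points `s` and jumps `c`, `d`. -/
def IsBreak (a b : ℝ) (s : ι → ℝ) (c d : ι → X) (f : ℝ → X) : Prop :=
  ∀ t ∈ Set.Icc a b,
      f t = ∑' j, ((if a ≤ s j ∧ s j < t then c j else 0) +
                   (if a < s j ∧ s j ≤ t then d j else 0))

lemma norm_ite_add_ite_le (p q : Prop) [Decidable p] [Decidable q] (u v : X) :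
    ‖(if p then u else 0) + (if q then v else 0)‖ ≤ ‖u‖ + ‖v‖ := by
  refine (norm_add_le _ _).trans (add_le_add ?_ ?_) <;> split_ifs <;> simp

lemma variation_split (f : ℝ → X) {x y z : ℝ} (hxy : x ≤ y) (hyz : y ≤ z) :
    eVariationOn f (Icc x z) = eVariationOn f (Icc x y) + eVariationOn f (Icc y z) := by
  simpa using (eVariationOn.Icc_add_Icc f (s := univ) hxy hyz (mem_univ _)).symm

variable [CompleteSpace X]

lemma summable_ite (hsum : Summable fun k => ‖c k‖ + ‖d k‖) (p q : ι → Prop)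
    [DecidablePred p] [DecidablePred q] :
    Summable fun j => (if p j then c j else 0) + (if q j then d j else 0) :=
  Summable.of_norm_bounded hsum fun _ => norm_ite_add_ite_le _ _ _ _

lemma increment (hsum : Summable fun k => ‖c k‖ + ‖d k‖) (hf : IsBreak a b s c d f)
    {x y : ℝ} (hx : x ∈ Icc a b) (hy : y ∈ Icc a b) (hxy : x ≤ y) :
    f y - f x = ∑' j, ((if x ≤ s j ∧ s j < y then c j else 0) +
      (if x < s j ∧ s j ≤ y then d j else 0)) := by
  rw [hf x hx, hf y hy, ← (summable_ite hsum _ _).tsum_sub (summable_ite hsum _ _)]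
  congr 1
  ext j
  have := hx.1
  rw [add_sub_add_comm]
  congr 1
  · by_cases h1 : a ≤ s j <;> by_cases h2 : s j < x <;> by_cases h3 : s j < y <;>
      simp [h1, h2, h3] <;> grind
  · by_cases h1 : a < s j <;> by_cases h2 : s j ≤ x <;> by_cases h3 : s j ≤ y <;>
      simp [h1, h2, h3] <;> grind

lemma tendsto_right (hsum : Summable fun k => ‖c k‖ + ‖d k‖) (hs : Function.Injective s)
    (hf : IsBreak a b s c d f) (k : ι) (hk : a ≤ s k) (hkb : s k < b) :
    Tendsto (fun w => edist (f (s k)) (f w)) (𝓝[>] (s k)) (𝓝 ‖c k‖ₑ) := by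
  classical
  have hev : ∀ᶠ w in 𝓝[>] (s k), w ∈ Ioo (s k) b := Ioo_mem_nhdsGT hkb
  have key : Tendsto (fun w => ∑' j, ((if s k ≤ s j ∧ s j < w then c j else 0) +
      (if s k < s j ∧ s j ≤ w then d j else 0))) (𝓝[>] (s k))
      (𝓝 (∑' j, if j = k then c j else 0)) := by
    refine tendsto_tsum_of_dominated_convergence hsum (fun j => ?_)
      (Eventually.of_forall fun w j => norm_ite_add_ite_le _ _ _ _)
    refine tendsto_const_nhds.congr' ?_
    by_cases hjk : j = k
    · subst hjk
      filter_upwards [self_mem_nhdsWithin] with w hw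
      simp [mem_Ioi.1 hw]
    · rcases lt_or_gt_of_ne (fun h => hjk (hs h)) with h | h
      · filter_upwards with w
        simp [hjk, not_le.2 h, not_lt.2 h.le]
      · filter_upwards [Ioo_mem_nhdsGT h] with w hw
        simp [hjk, not_lt.2 hw.2.le, not_le.2 hw.2]
  rw [tsum_ite_eq] at key
  refine key.enorm.congr' ?_
  filter_upwards [hev] with w hw
  rw [← increment hsum hf ⟨hk, hkb.le⟩ ⟨hk.trans hw.1.le, hw.2.le⟩ hw.1.le, edist_comm,
    edist_eq_enorm_sub]

lemma tendsto_left (hsum : Summable fun k => ‖c k‖ + ‖d k‖) (hs : Function.Injective s)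
    (hf : IsBreak a b s c d f) (k : ι) (hk : a < s k) (hkb : s k ≤ b) :
    Tendsto (fun w => edist (f w) (f (s k))) (𝓝[<] (s k)) (𝓝 ‖d k‖ₑ) := by
  classical
  have hev : ∀ᶠ w in 𝓝[<] (s k), w ∈ Ioo a (s k) := Ioo_mem_nhdsLT hk
  have key : Tendsto (fun w => ∑' j, ((if w ≤ s j ∧ s j < s k then c j else 0) +
      (if w < s j ∧ s j ≤ s k then d j else 0))) (𝓝[<] (s k))
      (𝓝 (∑' j, if j = k then d j else 0)) := by
    refine tendsto_tsum_of_dominated_convergence hsum (fun j => ?_)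
      (Eventually.of_forall fun w j => norm_ite_add_ite_le _ _ _ _)
    refine tendsto_const_nhds.congr' ?_
    by_cases hjk : j = k
    · subst hjk
      filter_upwards [self_mem_nhdsWithin] with w hw
      simp [mem_Iio.1 hw]
    · rcases lt_or_gt_of_ne (fun h => hjk (hs h)) with h | h
      · filter_upwards [Ioo_mem_nhdsLT h] with w hw
        simp [hjk, not_lt.2 hw.1.le, not_le.2 hw.1]
      · filter_upwards with w
        simp [hjk, not_le.2 h, not_lt.2 h.le]
  rw [tsum_ite_eq] at key
  refine key.enorm.congr' ?_
  filter_upwards [hev] with w hw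
  rw [← increment hsum hf ⟨hw.1.le, hw.2.le.trans hkb⟩ ⟨hk.le, hkb⟩ hw.2.le, edist_comm,
    edist_eq_enorm_sub]

/-- The variation on `[a, y]` is at least the sum of the norms of any finitely many jumps there.
A right jump at the endpoint `y` itself does not count. -/
lemma finite_lower (hsum : Summable fun k => ‖c k‖ + ‖d k‖) (hs : Function.Injective s)
    (hmem : ∀ k, s k ∈ Icc a b) (hf : IsBreak a b s c d f) (T : Finset ι) :
    ∀ y ∈ Icc a b, (∀ k ∈ T, s k ≤ y) →
      ∑ k ∈ T, ((if s k < y then ‖c k‖ₑ else 0) + (if a < s k then ‖d k‖ₑ else 0))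
        ≤ eVariationOn f (Icc a y) := by
  classical
  induction T using Finset.induction_on_max_value s with
  | empty => simp
  | insert k T hkT hmax ih =>
    intro y hy hle
    have hlt : ∀ j ∈ T, s j < s k := fun j hj =>
      lt_of_le_of_ne (hmax j hj) fun h => hkT (hs h ▸ hj)
    have hky : s k ≤ y := hle k (Finset.mem_insert_self _ _)
    rw [Finset.sum_insert hkT, variation_split f (hmem k).1 hky, add_assoc, add_comm]
    refine add_le_add ?_ ?_
    · rcases (hmem k).1.eq_or_lt with h | h
      · -- No break point lies to the left of `s k = a`, where moreover `d k` does not count.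
        have : T = ∅ := Finset.eq_empty_of_forall_notMem fun j hj =>
          absurd (hlt j hj) (not_lt.2 (h ▸ (hmem j).1))
        simp [this, h]
      · -- For `z < s k` close to `s k`, the jumps indexed by `T` all lie in `[a, z]`, while
        -- `[z, s k]` contributes the left jump at `s k` in the limit `z → s k`.
        rw [if_pos h]
        refine le_of_tendsto ((tendsto_left hsum hs hf k h (hmem k).2).add_const _) ?_
        have hT : ∀ᶠ z in 𝓝[<] (s k), ∀ j ∈ T, s j < z :=
          (Finset.eventually_all T).2 fun j hj => by
            filter_upwards [Ioo_mem_nhdsLT (hlt j hj)] with z hz using hz.1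
        filter_upwards [hT, Ioo_mem_nhdsLT h] with z hz hza
        rw [variation_split f hza.1.le hza.2.le, add_comm]
        refine add_le_add ?_ (eVariationOn.edist_le f (left_mem_Icc.2 hza.2.le)
          (right_mem_Icc.2 hza.2.le))
        refine le_trans (Finset.sum_le_sum fun j hj => ?_)
          (ih z ⟨hza.1.le, hza.2.le.trans (hmem k).2⟩ fun j hj => (hz j hj).le)
        rw [if_pos (hz j hj), if_pos ((hlt j hj).trans_le hky)]
    · split_ifs with h
      · refine le_of_tendsto (tendsto_right hsum hs hf k (hmem k).1 (h.trans_le hy.2)) ?_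
        filter_upwards [Ioo_mem_nhdsGT h] with z hz
        exact eVariationOn.edist_le f (left_mem_Icc.2 hky) ⟨hz.1.le, hz.2.le⟩
      · exact zero_le

/-- The extended-real break function whose jumps are the norms of those of `f`. -/
noncomputable def majorant (a : ℝ) (s : ι → ℝ) (c d : ι → X) (t : ℝ) : ℝ≥0∞ :=
  ∑' j, ((if s j < t then ‖c j‖ₑ else 0) + (if a < s j ∧ s j ≤ t then ‖d j‖ₑ else 0))

lemma edist_add_majorant_le (hsum : Summable fun k => ‖c k‖ + ‖d k‖)
    (hf : IsBreak a b s c d f) {x y : ℝ} (hx : x ∈ Icc a b) (hy : y ∈ Icc a b) (hxy : x ≤ y) :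
    edist (f y) (f x) + majorant a s c d x ≤ majorant a s c d y := by
  have h1 : edist (f y) (f x) ≤ ∑' j, ((if x ≤ s j ∧ s j < y then ‖c j‖ₑ else 0) +
      (if x < s j ∧ s j ≤ y then ‖d j‖ₑ else 0)) := by
    rw [edist_eq_enorm_sub, increment hsum hf hx hy hxy]
    refine enorm_tsum_le_tsum_enorm.trans (ENNReal.tsum_le_tsum fun j => ?_)
    refine (enorm_add_le _ _).trans (add_le_add ?_ ?_) <;> split_ifs <;> simp
  refine (add_le_add_left h1 _).trans ?_
  rw [majorant, majorant, ← ENNReal.tsum_add]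
  refine ENNReal.tsum_le_tsum fun j => ?_
  rw [add_add_add_comm]
  have := hx.1
  refine add_le_add ?_ ?_
  · by_cases h2 : s j < x
    · simp [h2, not_le.2 h2, h2.trans_le hxy]
    · by_cases h3 : s j < y <;> simp [h2, h3, not_lt.1 h2]
  · by_cases h2 : s j ≤ x
    · simp [h2, not_lt.2 h2, h2.trans hxy]
    · have : a < s j := by linarith
      by_cases h3 : s j ≤ y <;> simp [h2, h3, this, not_le.1 h2]

lemma upper (hsum : Summable fun k => ‖c k‖ + ‖d k‖) (hf : IsBreak a b s c d f) :
    eVariationOn f (Icc a b) ≤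
      ∑' k, ((if s k < b then ‖c k‖ₑ else 0) + (if a < s k then ‖d k‖ₑ else 0)) := by
  refine iSup_le fun p => ?_
  obtain ⟨n, u, hu, hmem⟩ := p
  have tel : ∀ n, ∑ i ∈ Finset.range n, edist (f (u (i + 1))) (f (u i)) +
      majorant a s c d (u 0) ≤ majorant a s c d (u n) := by
    intro n
    induction n with
    | zero => simp
    | succ n ih =>
      rw [Finset.sum_range_succ, add_right_comm, add_comm]
      exact (add_le_add_right ih _).trans
        (edist_add_majorant_le hsum hf (hmem n) (hmem (n + 1)) (hu n.le_succ))
  refine (le_self_add.trans (tel n)).trans (ENNReal.tsum_le_tsum fun j => add_le_add ?_ ?_)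
  · split_ifs with h1 h2
    · exact le_rfl
    · exact absurd (h1.trans_le (hmem n).2) h2
    · exact zero_le
    · exact le_rfl
  · split_ifs with h1 h2
    · exact le_rfl
    · exact absurd h1.1 h2
    · exact zero_le
    · exact le_rfl

end BreakFunction

/-- **Variation of a break function** (Section 3).
Let `f(t) = Σ_{a ≤ s_k < t} c_k + Σ_{a < s_k ≤ t} d_k` be a break function on `[a,b]`.
Then `f` is of bounded variation on `[a,b]` and
`Var(f,[a,b]) = Σ_{s_k < b} ‖c_k‖ + Σ_{s_k > a} ‖d_k‖`
(the sums of the norms of the one-sided jumps over `[a,b)` and `(a,b]` respectively). -/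
theorem break_function_variation
    {X : Type*} [NormedAddCommGroup X] [NormedSpace ℝ X] [CompleteSpace X]
    {a b : ℝ} (hab : a < b) {ι : Type*} [Countable ι]
    (s : ι → ℝ) (hs : Function.Injective s) (hmem : ∀ k, s k ∈ Set.Icc a b)
    (c d : ι → X) (hsum : Summable fun k => ‖c k‖ + ‖d k‖)
    (f : ℝ → X)
    (hf : ∀ t ∈ Set.Icc a b,
      f t = ∑' j, ((if a ≤ s j ∧ s j < t then c j else 0) +
                   (if a < s j ∧ s j ≤ t then d j else 0))) :
    BoundedVariationOn f (Set.Icc a b) ∧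
    eVariationOn f (Set.Icc a b) =
      ∑' k, ((if s k < b then (‖c k‖₊ : ℝ≥0∞) else 0) +
             (if a < s k then (‖d k‖₊ : ℝ≥0∞) else 0)) := by
  have hlow : (∑' k, ((if s k < b then ‖c k‖ₑ else 0) + (if a < s k then ‖d k‖ₑ else 0)))
      ≤ eVariationOn f (Set.Icc a b) := by
    rw [ENNReal.tsum_eq_iSup_sum]
    exact iSup_le fun T => BreakFunction.finite_lower hsum hs hmem hf T b
      (right_mem_Icc.2 hab.le) fun k _ => (hmem k).2
  have heq := le_antisymm (BreakFunction.upper hsum hf) hlow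
  refine ⟨?_, heq⟩
  rw [BoundedVariationOn, heq]
  refine ne_top_of_le_ne_top (b := ∑' k, ENNReal.ofReal (‖c k‖ + ‖d k‖))
    hsum.tsum_ofReal_ne_top (ENNReal.tsum_le_tsum fun k => ?_)
  rw [ENNReal.ofReal_add (norm_nonneg _) (norm_nonneg _), ofReal_norm, ofReal_norm]
  refine add_le_add ?_ ?_ <;> split_ifs <;> simp
end

section
/- Let X be a real Banach space, f : [a,b] → X, and a ≤ c < d ≤ b. If f is of bounded variation on the half-open interval (c,d], then the right-hand limit f(c+) exists and Var(f, [c,d]) = Var(f, (c,d]) + ‖f(c+) − f(c)‖. -/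
/-!
Bounded variation on `(c,d]` forces `f` to be Cauchy along `𝓝[>] c`, so completeness gives the
limit `L` (`BoundedVariationOn.exists_tendsto_right`). A partition of `[c,d]` starting at `c` can be
refined by a point `s` slightly to the right of `c`; letting `s → c` splits off exactly the jump
`‖L - f c‖`, which is `eVariationOn.eVariationOn_on_inter_Ici_eq_Ioi_add_edist` relative to
`Icc c d`.
-/

open Set Filter Topology ENNReal NNReal

/-- **Theorem 4.6 (ii)**: if `f : [a,b] → X` is of bounded variation on `(c,d]` with
`a ≤ c < d ≤ b`, then the right-hand limit `f(c+)` exists and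
`Var(f,[c,d]) = Var(f,(c,d]) + ‖f(c+) - f(c)‖`. -/
theorem variation_Icc_eq_Ioc_add_jump
    {X : Type*} [NormedAddCommGroup X] [NormedSpace ℝ X] [CompleteSpace X]
    {a b c d : ℝ} (f : ℝ → X) (hac : a ≤ c) (hcd : c < d) (hdb : d ≤ b)
    (hf : BoundedVariationOn f (Set.Ioc c d)) :
    ∃ L : X, Filter.Tendsto f (nhdsWithin c (Set.Ioi c)) (nhds L) ∧
      eVariationOn f (Set.Icc c d) =
        eVariationOn f (Set.Ioc c d) + (‖L - f c‖₊ : ℝ≥0∞) := by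
  -- Relative to `Icc c d`, the points to the right of `c` form `Ioc c d`, which generates `𝓝[>] c`.
  have hIoi : Icc c d ∩ Ioi c = Ioc c d := by grind
  have hIci : Icc c d ∩ Ici c = Icc c d := by grind
  have hnhds : 𝓝[Ioc c d] c = 𝓝[>] c := nhdsWithin_Ioc_eq_nhdsGT hcd
  have hIoc : Ioc c d ∩ Ioi c = Ioc c d := by grind
  obtain ⟨L, hL⟩ := hf.exists_tendsto_right c
  rw [hIoc] at hL
  refine ⟨L, hnhds ▸ hL, ?_⟩
  have key := eVariationOn.eVariationOn_on_inter_Ici_eq_Ioi_add_edist (f := f) (s := Icc c d)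
    (a := c) (l := L) (by rw [hIoi, hnhds]; infer_instance) (left_mem_Icc.2 hcd.le)
    (by rwa [hIoi])
  rwa [hIci, hIoi, edist_comm, edist_eq_enorm_sub] at key
end

section
/- Let X be a real Banach space, f : [a,b] → X, and a ≤ c < d ≤ b. If f is of bounded variation on the open interval (c,d), then both one-sided limits f(c+) and f(d−) exist and Var(f, [c,d]) = Var(f, (c,d)) + ‖f(c+) − f(c)‖ + ‖f(d) − f(d−)‖. -/
/-!
Bounded variation on `(c,d)` together with completeness of `X` gives the one-sided limits
(`BoundedVariationOn.exists_tendsto_right` and `BoundedVariationOn.exists_tendsto_left`).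
The variation identity comes from adding the two endpoints one at a time: passing from `(c,d)` to
`[c,d)` adds the jump `‖f(c+) - f(c)‖`, and passing from `[c,d)` to `[c,d]` adds `‖f(d) - f(d−)‖`,
by `eVariationOn.eVariationOn_on_inter_Ici_eq_Ioi_add_edist` and its left-sided analogue.
-/

open Set Filter Topology ENNReal NNReal

/-- **Theorem 4.6 (iii)**: if `f : [a,b] → X` is of bounded variation on `(c,d)` with
`a ≤ c < d ≤ b`, then both one-sided limits `f(c+)` and `f(d−)` exist and
`Var(f,[c,d]) = Var(f,(c,d)) + ‖f(c+) - f(c)‖ + ‖f(d) - f(d−)‖`. -/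
theorem variation_Icc_eq_Ioo_add_jumps
    {X : Type*} [NormedAddCommGroup X] [NormedSpace ℝ X] [CompleteSpace X]
    {a b c d : ℝ} (f : ℝ → X) (hac : a ≤ c) (hcd : c < d) (hdb : d ≤ b)
    (hf : BoundedVariationOn f (Set.Ioo c d)) :
    ∃ L M : X, Filter.Tendsto f (nhdsWithin c (Set.Ioi c)) (nhds L) ∧
      Filter.Tendsto f (nhdsWithin d (Set.Iio d)) (nhds M) ∧
      eVariationOn f (Set.Icc c d) =
        eVariationOn f (Set.Ioo c d) + (‖L - f c‖₊ : ℝ≥0∞) + (‖f d - M‖₊ : ℝ≥0∞) := by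
  obtain ⟨L, hL⟩ := hf.exists_tendsto_right c
  obtain ⟨M, hM⟩ := hf.exists_tendsto_left d
  have hIooc : Ioo c d ∩ Ioi c = Ioo c d := by ext; grind
  have hIood : Ioo c d ∩ Iio d = Ioo c d := by ext; grind
  rw [hIooc, nhdsWithin_Ioo_eq_nhdsGT hcd] at hL
  rw [hIood, nhdsWithin_Ioo_eq_nhdsLT hcd] at hM
  refine ⟨L, M, hL, hM, ?_⟩
  have hleft : eVariationOn f (Ico c d) = eVariationOn f (Ioo c d) + edist (f c) L := by
    have h1 : Ico c d ∩ Ici c = Ico c d := by ext; grind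
    have h2 : Ico c d ∩ Ioi c = Ioo c d := by ext; grind
    have key := eVariationOn.eVariationOn_on_inter_Ici_eq_Ioi_add_edist
      (f := f) (s := Ico c d) (a := c) (l := L)
    rw [h1, h2, nhdsWithin_Ioo_eq_nhdsGT hcd] at key
    exact key inferInstance ⟨le_rfl, hcd⟩ hL
  have hright : eVariationOn f (Icc c d) = eVariationOn f (Ico c d) + edist (f d) M := by
    have h1 : Icc c d ∩ Iic d = Icc c d := by ext; grind
    have h2 : Icc c d ∩ Iio d = Ico c d := by ext; grind
    have key := eVariationOn.eVariationOn_on_inter_Iic_eq_Iio_add_edist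
      (f := f) (s := Icc c d) (a := d) (l := M)
    rw [h1, h2, nhdsWithin_Ico_eq_nhdsLT hcd] at key
    exact key inferInstance ⟨hcd.le, le_rfl⟩ hM
  rw [hright, hleft, edist_comm (f c) L, edist_eq_enorm_sub, edist_eq_enorm_sub]
  rfl
end

section
/- Let X be a real Banach space, f : [a,b] → X a function of bounded variation on [a,b], and c ∈ (a,b). Then both one-sided limits f(c−) and f(c+) exist and the limit of Var(f, [c−δ, c+δ]) as δ → 0+ equals ‖f(c) − f(c−)‖ + ‖f(c+) − f(c)‖. -/
/-!
The one-sided limits exist because `f` has bounded variation and `X` is complete. For small `δ`,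
additivity of the variation at `c` gives
`Var(f, [c-δ, c+δ]) = Var(f, [c-δ, c]) + Var(f, [c, c+δ])`.
Since the variation over `[c-δ, c)` and over `(c, c+δ]` tends to `0`, the two summands tend to the
jumps `‖f c - f(c-)‖` and `‖f(c+) - f c‖`
(`BoundedVariationOn.tendsto_eVariationOn_Icc_left` and its right-hand counterpart).
-/

open Set Filter Topology ENNReal NNReal

/-- **Remark 4.8 (first part)**: if `f : [a,b] → X` is of bounded variation on `[a,b]`
and `c ∈ (a,b)`, then the one-sided limits `f(c−)` and `f(c+)` exist and
`lim_{δ → 0+} Var(f, [c-δ, c+δ]) = ‖f(c) - f(c−)‖ + ‖f(c+) - f(c)‖`. -/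
theorem variation_around_point_tendsto_jumps
    {X : Type*} [NormedAddCommGroup X] [NormedSpace ℝ X] [CompleteSpace X]
    {a b c : ℝ} (f : ℝ → X) (hf : BoundedVariationOn f (Set.Icc a b))
    (hc : c ∈ Set.Ioo a b) :
    ∃ L M : X, Filter.Tendsto f (nhdsWithin c (Set.Iio c)) (nhds L) ∧
      Filter.Tendsto f (nhdsWithin c (Set.Ioi c)) (nhds M) ∧
      Filter.Tendsto (fun δ : ℝ => eVariationOn f (Set.Icc (c - δ) (c + δ)))
        (nhdsWithin 0 (Set.Ioi 0))
        (nhds ((‖f c - L‖₊ : ℝ≥0∞) + (‖M - f c‖₊ : ℝ≥0∞))) := by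
  have hmem : Icc a b ∈ 𝓝 c := Icc_mem_nhds hc.1 hc.2
  have hcs : c ∈ Icc a b := ⟨hc.1.le, hc.2.le⟩
  have hleft : 𝓝[Icc a b ∩ Iio c] c = 𝓝[<] c :=
    nhdsWithin_inter_of_mem (mem_nhdsWithin_of_mem_nhds hmem)
  have hright : 𝓝[Icc a b ∩ Ioi c] c = 𝓝[>] c :=
    nhdsWithin_inter_of_mem (mem_nhdsWithin_of_mem_nhds hmem)
  obtain ⟨L, hL⟩ := hf.exists_tendsto_left c
  obtain ⟨M, hM⟩ := hf.exists_tendsto_right c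
  have hVL := hf.tendsto_eVariationOn_Icc_left hL hcs
  have hVR := hf.tendsto_eVariationOn_Icc_right hM hcs
  rw [hleft] at hL hVL
  rw [hright] at hM hVR
  refine ⟨L, M, hL, hM, ?_⟩
  have hsub : Tendsto (fun δ : ℝ => c - δ) (𝓝[>] 0) (𝓝[<] c) := by
    refine tendsto_nhdsWithin_iff.2 ⟨?_, ?_⟩
    · exact (Continuous.tendsto' (by fun_prop) 0 c (by simp)).mono_left nhdsWithin_le_nhds
    · filter_upwards [self_mem_nhdsWithin] with δ hδ
      simpa using hδ
  have hadd : Tendsto (fun δ : ℝ => c + δ) (𝓝[>] 0) (𝓝[>] c) := by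
    refine tendsto_nhdsWithin_iff.2 ⟨?_, ?_⟩
    · exact (Continuous.tendsto' (by fun_prop) 0 c (by simp)).mono_left nhdsWithin_le_nhds
    · filter_upwards [self_mem_nhdsWithin] with δ hδ
      simpa using hδ
  have hsum := (hVL.comp hsub).add (hVR.comp hadd)
  rw [edist_comm (f c) M, edist_eq_enorm_sub, edist_eq_enorm_sub] at hsum
  refine hsum.congr' ?_
  -- The limits above concern `[a, b] ∩ [c-δ, c+δ]`, which is `[c-δ, c+δ]` for small `δ`.
  filter_upwards [self_mem_nhdsWithin,
    mem_nhdsWithin_of_mem_nhds (Iio_mem_nhds (sub_pos.2 hc.1)),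
    mem_nhdsWithin_of_mem_nhds (Iio_mem_nhds (sub_pos.2 hc.2))] with δ hδ hδa hδb
  simp only [mem_Ioi, mem_Iio] at hδ hδa hδb
  simp only [Function.comp_apply]
  rw [eVariationOn.Icc_add_Icc f (by linarith) (by linarith) hcs,
    inter_eq_right.2 (Icc_subset_Icc (by linarith) (by linarith))]
end

section
/- Let X be a real Banach space and let f : [a,b] → X be continuous on [a,b] and of bounded variation on [a,b]. Let (A_n) be a contracting sequence of subsets of [a,b] (i.e. A_{n+1} ⊆ A_n for all n) with ⋂_n A_n = ∅. For each n let v_n be the supremum, over all finite families J_1, …, J_m of pairwise disjoint nonempty intervals (order-connected subsets of ℝ) with J_i ⊆ A_n for each i, of Σ_{i=1}^m Var(f, J_i) (with v_n = 0 if A_n contains no nonempty interval). Then v_n → 0 as n → ∞. -/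
/-!
The variation of `f` is dominated by a finite Borel measure `μ`, namely the Stieltjes measure of the
total variation function of `f` (extended constantly outside `[a, b]`). Since `f` is continuous,
endpoints carry no variation, so `Var(f, J) ≤ μ (interior J)` for every interval `J ⊆ [a, b]`
(`exists_measure_eVariationOn_le`). The interiors of the disjoint intervals `J i ⊆ A n` are disjoint
open subsets of `interior (A n)`, hence `v n ≤ μ (interior (A n))`. The sets `interior (A n)` are
measurable, even when `A n` is not, and they decrease to `∅`, so continuity from above of `μ`
finishes the proof.
-/

open Set Filter Topology ENNReal NNReal

/-- A continuous function of bounded variation on the line has its variation on intervals dominated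
by the Stieltjes measure of its variation function. Passing to the interior is possible because
continuity lets the endpoints be removed: `Var(g, [x, y]) = Var(g, [x, y))` is the supremum of
`Var(g, [p, q]) = μ (p, q]` over `x ≤ p ≤ q < y`, and `(p, q] ⊆ (x, y)`. -/
lemma exists_measure_eVariationOn_le_of_continuous
    {X : Type*} [NormedAddCommGroup X] {g : ℝ → X} (hg : Continuous g)
    (hbv : BoundedVariationOn g univ) :
    ∃ μ : MeasureTheory.Measure ℝ, MeasureTheory.IsFiniteMeasure μ ∧
      ∀ J : Set ℝ, J.OrdConnected → eVariationOn g J ≤ μ (interior J) := by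
  let V : StieltjesFunction ℝ :=
    { toFun := variationOnFromTo g univ 0
      mono' := by
        rw [← monotoneOn_univ]
        exact variationOnFromTo.monotoneOn hbv.locallyBoundedVariationOn (mem_univ _)
      right_continuous' := fun x =>
        hbv.continuousWithinAt_variationOnFromTo_Ici hg.continuousWithinAt }
  have hIoc : ∀ p q : ℝ, p ≤ q → eVariationOn g (Icc p q) = V.measure (Ioc p q) := by
    intro p q hpq
    have h : V q - V p = (eVariationOn g (Icc p q)).toReal := by
      have h1 := variationOnFromTo.sub_right hbv.locallyBoundedVariationOn
        (mem_univ 0) (mem_univ q) (mem_univ p)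
      rw [variationOnFromTo.eq_of_le _ _ hpq, univ_inter] at h1
      exact h1
    rw [V.measure_Ioc, h, ENNReal.ofReal_toReal (hbv.mono (subset_univ _))]
  have hIoo : ∀ x y : ℝ, x ≤ y → eVariationOn g (Icc x y) ≤ V.measure (Ioo x y) := by
    intro x y hxy
    rcases hxy.eq_or_lt with rfl | hxy
    · rw [eVariationOn.subsingleton g (by simp)]
      exact zero_le
    rw [← eVariationOn.eVariationOn_Ico_eq_Icc_of_continuousWithinAt hg.continuousWithinAt,
      eVariationOn.eq_biSup_inter_Icc]
    refine iSup₂_le fun p hp => ?_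
    obtain ⟨hp1, hp2, hp3⟩ := hp
    calc eVariationOn g (Ico x y ∩ Icc p.1 p.2)
        ≤ eVariationOn g (Icc p.1 p.2) := eVariationOn.mono g inter_subset_right
      _ = V.measure (Ioc p.1 p.2) := hIoc _ _ hp3
      _ ≤ V.measure (Ioo x y) :=
        MeasureTheory.measure_mono fun z hz => ⟨hp1.1.trans_lt hz.1, hz.2.trans_lt hp2.2⟩
  refine ⟨V.measure, ?_, fun J hJ => ?_⟩
  · exact V.isFiniteMeasure_of_forall_abs_le
      fun x => variationOnFromTo.abs_le_eVariationOn hbv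
  · rw [eVariationOn.eq_biSup_inter_Icc]
    refine iSup₂_le fun p hp => ?_
    obtain ⟨hp1, hp2, hp3⟩ := hp
    calc eVariationOn g (J ∩ Icc p.1 p.2)
        ≤ eVariationOn g (Icc p.1 p.2) := eVariationOn.mono g inter_subset_right
      _ ≤ V.measure (Ioo p.1 p.2) := hIoo _ _ hp3
      _ ≤ V.measure (interior J) := MeasureTheory.measure_mono
          (interior_maximal (Ioo_subset_Icc_self.trans (hJ.out hp1 hp2)) isOpen_Ioo)

/-- The version of `exists_measure_eVariationOn_le_of_continuous` for a function on `[a, b]`,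
obtained by extending the function constantly to both sides. -/
lemma exists_measure_eVariationOn_le
    {X : Type*} [NormedAddCommGroup X] {a b : ℝ} {f : ℝ → X}
    (hcont : ContinuousOn f (Icc a b)) (hbv : BoundedVariationOn f (Icc a b)) :
    ∃ μ : MeasureTheory.Measure ℝ, MeasureTheory.IsFiniteMeasure μ ∧
      ∀ J : Set ℝ, J.OrdConnected → J ⊆ Icc a b → eVariationOn f J ≤ μ (interior J) := by
  rcases lt_or_ge b a with hba | hab
  · refine ⟨0, inferInstance, fun J _ hJ => ?_⟩
    rw [Icc_eq_empty hba.not_ge, subset_empty_iff] at hJ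
    simp [hJ, eVariationOn.subsingleton]
  have hc : Continuous (fun x : ℝ => f (projIcc a b hab x)) :=
    hcont.comp_continuous (continuous_subtype_val.comp continuous_projIcc) fun x => Subtype.prop _
  have hv : BoundedVariationOn (fun x : ℝ => f (projIcc a b hab x)) univ :=
    ne_top_of_le_ne_top hbv (eVariationOn.comp_le_of_monotoneOn f
      (fun x => (projIcc a b hab x : ℝ)) (fun x _ y _ hxy => monotone_projIcc hab hxy)
      fun x _ => Subtype.prop _)
  obtain ⟨μ, hμ, h⟩ := exists_measure_eVariationOn_le_of_continuous hc hv
  refine ⟨μ, hμ, fun J hJ hJs => ?_⟩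
  rw [eVariationOn.congr (g := fun x : ℝ => f (projIcc a b hab x))
    fun x hx => by simp [projIcc_of_mem hab (hJs hx)]]
  exact h J hJ

/-- **Lemma 4.11**: let `f : [a,b] → X` be continuous and of bounded variation on
`[a,b]`, and let `(A_n)` be a contracting sequence of subsets of `[a,b]` with
`⋂_n A_n = ∅`.  For each `n`, let `v_n` be the supremum, over all finite families of
pairwise disjoint nonempty intervals contained in `A_n`, of the sum of the variations
of `f` over these intervals (`v_n = 0` if `A_n` contains no nonempty interval, the
supremum over the empty family being `0`).  Then `v_n → 0` as `n → ∞`. -/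
theorem variation_on_contracting_elementary_sets_tendsto_zero
    {X : Type*} [NormedAddCommGroup X] [NormedSpace ℝ X] [CompleteSpace X]
    {a b : ℝ} (f : ℝ → X)
    (hcont : ContinuousOn f (Set.Icc a b)) (hbv : BoundedVariationOn f (Set.Icc a b))
    (A : ℕ → Set ℝ) (hA : ∀ n, A n ⊆ Set.Icc a b)
    (hcontr : ∀ n, A (n + 1) ⊆ A n) (hempty : ⋂ n, A n = ∅) :
    Filter.Tendsto
      (fun n =>
        ⨆ (m : ℕ) (J : Fin m → Set ℝ) (_ : ∀ i, (J i).OrdConnected)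
          (_ : ∀ i, (J i).Nonempty) (_ : ∀ i, J i ⊆ A n)
          (_ : Pairwise (Function.onFun Disjoint J)),
          ∑ i, eVariationOn f (J i))
      Filter.atTop (nhds (0 : ℝ≥0∞)) := by
  obtain ⟨μ, hμ, hle⟩ := exists_measure_eVariationOn_le hcont hbv
  have hlim : Tendsto (fun n => μ (interior (A n))) atTop (𝓝 0) := by
    have h := MeasureTheory.tendsto_measure_iInter_atTop (μ := μ) (s := fun n => interior (A n))
      (fun n => isOpen_interior.measurableSet.nullMeasurableSet)
      (antitone_nat_of_succ_le fun n => interior_mono (hcontr n))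
      ⟨0, MeasureTheory.measure_ne_top _ _⟩
    have he : ⋂ n, interior (A n) = ∅ :=
      subset_empty_iff.1 (hempty ▸ iInter_mono fun n => interior_subset)
    rwa [he, MeasureTheory.measure_empty] at h
  refine tendsto_of_tendsto_of_tendsto_of_le_of_le tendsto_const_nhds hlim
    (fun n => zero_le) fun n => ?_
  simp only [iSup_le_iff]
  intro m J hJ _ hJA hdisj
  calc ∑ i, eVariationOn f (J i)
      ≤ ∑ i, μ (interior (J i)) :=
        Finset.sum_le_sum fun i _ => hle (J i) (hJ i) ((hJA i).trans (hA n))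
    _ = μ (⋃ i, interior (J i)) := by
        rw [MeasureTheory.measure_iUnion
          (fun i j hij => (hdisj hij).mono interior_subset interior_subset)
          (fun i => isOpen_interior.measurableSet), tsum_fintype]
    _ ≤ μ (interior (A n)) :=
        MeasureTheory.measure_mono (iUnion_subset fun i => interior_mono (hJA i))
end
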